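/- Let f : ℝ/ℤ → [0,1] be an integrable Borel function with f ≢ 0 and f ≢ 1. If the stationary determinantal measure μ_f is ψ-mixing, i.e. ψ_{μ_f}(ℓ) → 0 as ℓ → ∞, then Σ_{n=1}^∞ n·|f̂(n)|² < ∞; since f is real-valued this means f belongs to the Sobolev space H^{1/2}(𝕋), i.e. Σ_{n∈ℤ} |n|·|f̂(n)|² < ∞. -/

import Mathlib

open MeasureTheory Filter Matrix
open scoped ENNReal

/-- The `n`-th Fourier coefficient of a function on the circle `ℝ/ℤ`. -/
noncomputable def fhat (f : AddCircle (1:ℝ) → ℝ) (n : ℤ) : ℂ :=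
  fourierCoeff (fun t => (f t : ℂ)) n

/-- `μ` is the stationary determinantal measure on `{0,1}^ℤ` with kernel `f̂(n-m)`. -/
def IsDeterminantal (f : AddCircle (1:ℝ) → ℝ) (μ : Measure (ℤ → Bool)) : Prop :=
  ∀ s : Finset ℤ,
    ((μ {x | ∀ n ∈ s, x n = true}).toReal : ℂ) =
      Matrix.det (Matrix.of fun i j : s => fhat f ((i:ℤ) - (j:ℤ)))

/-- The σ-algebra on `ℤ → Bool` generated by the coordinates in `S`. -/
def coordSigma (S : Set ℤ) : MeasurableSpace (ℤ → Bool) :=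
  MeasurableSpace.comap (fun x (n : S) => x (n : ℤ)) inferInstance

/-- The ψ-function `ψ_μ(ℓ)` of a measure on `{0,1}^ℤ`, valued in `[0,∞]`. -/
noncomputable def psi (μ : Measure (ℤ → Bool)) (ℓ : ℕ) : ℝ≥0∞ :=
  ⨆ (A : Set (ℤ → Bool)) (_ : MeasurableSet[coordSigma {n : ℤ | n ≤ 0}] A) (_ : 0 < μ A)
    (B : Set (ℤ → Bool)) (_ : MeasurableSet[coordSigma {n : ℤ | (ℓ : ℤ) ≤ n}] B) (_ : 0 < μ B),
      ENNReal.ofReal |(μ (A ∩ B)).toReal / ((μ A).toReal * (μ B).toReal) - 1|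

/-!
If `ψ(ℓ) < 1` for one lag `ℓ`, then events `A`, `B` determined by the sites `≤ 0` and `≥ ℓ` satisfy
`μ(A ∩ B) ≥ (1 - ψ(ℓ)) μ(A) μ(B)`. Take for them the events that two blocks of `N` consecutive
sites are fully occupied. As `0 ≤ f ≤ 1` and `f ≢ 0`, their probabilities are the determinants of
positive definite Toeplitz matrices `P, Q ≤ 1`, while
`μ(A ∩ B) = det (P, C; C*, Q) = det P · det (Q - C* P⁻¹ C)`.
Since `det H ≤ exp (tr H - N)` for positive semidefinite `H` of size `N`, this is at most
`det P · det Q · exp (-tr (Q⁻¹ C* P⁻¹ C)) ≤ det P · det Q · exp (-‖C‖²)` in the Hilbert–Schmidt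
norm. Hence `‖C‖² ≤ -log (1 - ψ(ℓ))` for every `N`, and as `C` is a Hankel matrix up to the order of
its rows, `‖C‖²` dominates the partial sums of `∑ (k + 1) |f̂(ℓ + 1 + k)|²`.
-/

section BlockDeterminant

open scoped ComplexOrder MatrixOrder

variable {𝕜 m n : Type*} [RCLike 𝕜] [Fintype m] [Fintype n]

theorem posSemidef_trace_mul_nonneg {A B : Matrix n n 𝕜} (hA : A.PosSemidef)
    (hB : B.PosSemidef) : 0 ≤ (A * B).trace := by
  classical
  obtain ⟨X, rfl⟩ := CStarAlgebra.nonneg_iff_eq_star_mul_self.mp hA.nonneg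
  rw [star_eq_conjTranspose, ← trace_mul_cycle]
  exact (hB.mul_mul_conjTranspose_same X).trace_nonneg

theorem trace_conjTranspose_mul_self_eq_sum_norm_sq (C : Matrix m n 𝕜) :
    (Cᴴ * C).trace = ((∑ i, ∑ j, ‖C i j‖ ^ 2 : ℝ) : 𝕜) := by
  simp only [trace, diag_apply, mul_apply, conjTranspose_apply, RCLike.star_def, RCLike.conj_mul,
    RCLike.ofReal_sum, RCLike.ofReal_pow]
  exact Finset.sum_comm

variable [DecidableEq n]

theorem posDef_one_le_inv {Q : Matrix n n 𝕜} (hQ : Q.PosDef) (hQ1 : Q ≤ 1) : 1 ≤ Q⁻¹ := by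
  have hdet : IsUnit Q.det := (isUnit_iff_isUnit_det Q).1 hQ.isUnit
  have hsub : Q⁻¹ - 1 = (1 - Q) + (1 - Q)ᴴ * Q⁻¹ * (1 - Q) := by
    rw [(le_iff.1 hQ1).isHermitian.eq, sub_mul, one_mul, mul_nonsing_inv Q hdet, mul_sub,
      sub_mul _ _ Q, mul_one, one_mul, nonsing_inv_mul Q hdet]
    abel
  rw [le_iff, hsub]
  exact (le_iff.1 hQ1).add (hQ.inv.posSemidef.conjTranspose_mul_mul_same _)

theorem trace_le_trace_inv_mul {Q M : Matrix n n 𝕜} (hQ : Q.PosDef) (hQ1 : Q ≤ 1)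
    (hM : M.PosSemidef) : M.trace ≤ (Q⁻¹ * M).trace := by
  have hdiff := posSemidef_trace_mul_nonneg (le_iff.1 (posDef_one_le_inv hQ hQ1)) hM
  rwa [sub_mul, one_mul, trace_sub, sub_nonneg] at hdiff

theorem posSemidef_det_le_exp_trace_sub_card {H : Matrix n n 𝕜} (hH : H.PosSemidef) :
    H.det ≤ (Real.exp (RCLike.re H.trace - Fintype.card n) : 𝕜) := by
  rw [hH.isHermitian.det_eq_prod_eigenvalues, hH.isHermitian.trace_eq_sum_eigenvalues,
    ← RCLike.ofReal_prod, ← RCLike.ofReal_sum, RCLike.ofReal_re, RCLike.ofReal_le_ofReal]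
  set ev := hH.isHermitian.eigenvalues
  calc ∏ i, ev i ≤ ∏ i, Real.exp (ev i - 1) :=
        Finset.prod_le_prod (fun i _ ↦ hH.eigenvalues_nonneg i) fun i _ ↦ by
          simpa using Real.add_one_le_exp (ev i - 1)
    _ = Real.exp (∑ i, ev i - Fintype.card n) := by
        simp [← Real.exp_sum, Finset.sum_sub_distrib]

theorem posSemidef_det_le_det_mul_exp_trace {Q S : Matrix n n 𝕜} (hQ : Q.PosDef)
    (hS : S.PosSemidef) :
    S.det ≤ Q.det * (Real.exp (RCLike.re (Q⁻¹ * S).trace - Fintype.card n) : 𝕜) := by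
  have hunit : IsUnit Q.det := (isUnit_iff_isUnit_det Q).1 hQ.isUnit
  obtain ⟨X, hX⟩ := CStarAlgebra.nonneg_iff_eq_star_mul_self.mp hQ.inv.posSemidef.nonneg
  rw [star_eq_conjTranspose] at hX
  have htrace : (X * S * Xᴴ).trace = (Q⁻¹ * S).trace := by rw [hX, trace_mul_cycle]
  have hdet : Q.det * (X * S * Xᴴ).det = S.det := by
    calc Q.det * (X * S * Xᴴ).det = (Q * (Xᴴ * X) * S).det := by simp only [det_mul]; ring
      _ = S.det := by rw [← hX, mul_nonsing_inv Q hunit, one_mul]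
  rw [← hdet, ← htrace]
  exact mul_le_mul_of_nonneg_left
    (posSemidef_det_le_exp_trace_sub_card (hS.mul_mul_conjTranspose_same X)) hQ.det_pos.le

variable [DecidableEq m]

theorem sum_norm_sq_le_trace_inv_mul {P : Matrix m m 𝕜} {Q : Matrix n n 𝕜} (hP : P.PosDef)
    (hP1 : P ≤ 1) (hQ : Q.PosDef) (hQ1 : Q ≤ 1) (C : Matrix m n 𝕜) :
    ∑ i, ∑ j, ‖C i j‖ ^ 2 ≤ RCLike.re (Q⁻¹ * (Cᴴ * P⁻¹ * C)).trace := by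
  rw [← RCLike.ofReal_re (K := 𝕜) (∑ i, ∑ j, ‖C i j‖ ^ 2)]
  refine RCLike.re_monotone ?_
  calc ((∑ i, ∑ j, ‖C i j‖ ^ 2 : ℝ) : 𝕜) = (C * Cᴴ).trace := by
        rw [← trace_conjTranspose_mul_self_eq_sum_norm_sq, trace_mul_comm]
    _ ≤ (P⁻¹ * (C * Cᴴ)).trace :=
        trace_le_trace_inv_mul hP hP1 (posSemidef_self_mul_conjTranspose C)
    _ = (Cᴴ * P⁻¹ * C).trace := by rw [← Matrix.mul_assoc, trace_mul_cycle]
    _ ≤ (Q⁻¹ * (Cᴴ * P⁻¹ * C)).trace :=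
        trace_le_trace_inv_mul hQ hQ1 (hP.inv.posSemidef.conjTranspose_mul_mul_same C)

theorem det_fromBlocks_le_mul_exp_neg_sum_norm_sq {P : Matrix m m 𝕜} {Q : Matrix n n 𝕜}
    {C : Matrix m n 𝕜} (hP : P.PosDef) (hP1 : P ≤ 1) (hQ : Q.PosDef) (hQ1 : Q ≤ 1)
    (hK : (fromBlocks P C Cᴴ Q).PosSemidef) :
    (fromBlocks P C Cᴴ Q).det ≤
      P.det * Q.det * (Real.exp (-∑ i, ∑ j, ‖C i j‖ ^ 2) : 𝕜) := by
  have : Invertible P := hP.isUnit.invertible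
  have hunit : IsUnit Q.det := (isUnit_iff_isUnit_det Q).1 hQ.isUnit
  have hschur : (Q - Cᴴ * P⁻¹ * C).PosSemidef := (PosDef.fromBlocks₁₁ C Q hP).1 hK
  have htrace : RCLike.re (Q⁻¹ * (Q - Cᴴ * P⁻¹ * C)).trace - Fintype.card n
      ≤ -∑ i, ∑ j, ‖C i j‖ ^ 2 := by
    rw [Matrix.mul_sub, nonsing_inv_mul Q hunit, trace_sub, trace_one, map_sub, RCLike.natCast_re]
    linarith [sum_norm_sq_le_trace_inv_mul hP hP1 hQ hQ1 C]
  rw [det_fromBlocks₁₁, invOf_eq_nonsing_inv, mul_assoc]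
  refine mul_le_mul_of_nonneg_left ?_ hP.det_pos.le
  refine (posSemidef_det_le_det_mul_exp_trace hQ hschur).trans ?_
  refine mul_le_mul_of_nonneg_left ?_ hQ.det_pos.le
  exact RCLike.ofReal_le_ofReal.2 (Real.exp_le_exp.2 htrace)

end BlockDeterminant

section FourierCoefficients

variable {f : AddCircle (1 : ℝ) → ℝ}

theorem volume_eq_haarAddCircle :
    (volume : Measure (AddCircle (1 : ℝ))) = AddCircle.haarAddCircle := by
  rw [AddCircle.volume_eq_smul_haarAddCircle, ENNReal.ofReal_one, one_smul]

theorem fhat_eq_integral (f : AddCircle (1 : ℝ) → ℝ) (n : ℤ) :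
    fhat f n = ∫ t, fourier (-n) t * (f t : ℂ) := by
  rw [volume_eq_haarAddCircle]
  rfl

theorem fhat_neg (f : AddCircle (1 : ℝ) → ℝ) (n : ℤ) : fhat f (-n) = star (fhat f n) := by
  rw [fhat_eq_integral, fhat_eq_integral, Complex.star_def, ← integral_conj]
  simp only [map_mul, Complex.conj_ofReal, ← fourier_neg]

theorem norm_fhat_neg (f : AddCircle (1 : ℝ) → ℝ) (n : ℤ) : ‖fhat f (-n)‖ = ‖fhat f n‖ := by
  rw [fhat_neg, norm_star]

theorem fhat_eq_zero_of_ae_eq_zero (hf : f =ᵐ[volume] 0) (n : ℤ) : fhat f n = 0 := by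
  rw [fhat_eq_integral]
  refine integral_eq_zero_of_ae ?_
  filter_upwards [hf] with t ht
  simp [ht]

theorem integrable_fourier_mul (hf : Integrable f) (n : ℤ) :
    Integrable fun t : AddCircle (1 : ℝ) ↦ fourier n t * (f t : ℂ) := by
  rw [volume_eq_haarAddCircle] at hf ⊢
  exact hf.ofReal.fourier_smul n

theorem fhat_one_sub (hf : Integrable f) (n : ℤ) :
    fhat (1 - f) n = (if n = 0 then 1 else 0) - fhat f n := by
  have hone : ∫ t : AddCircle (1 : ℝ), fourier (-n) t = if n = 0 then (1 : ℂ) else 0 := by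
    have := congrFun (fourierCoeff_fourier (T := 1) 0) n
    rw [fourierCoeff, ← volume_eq_haarAddCircle, Pi.single_apply] at this
    simpa only [fourier_zero, smul_eq_mul, mul_one] using this
  rw [fhat_eq_integral, fhat_eq_integral, ← hone,
    ← integral_sub _ (integrable_fourier_mul hf (-n))]
  · simp only [Pi.sub_apply, Pi.one_apply, Complex.ofReal_sub, Complex.ofReal_one, mul_sub, mul_one]
  · simpa only [Complex.ofReal_one, mul_one] using
      integrable_fourier_mul (integrable_const (1 : ℝ)) (-n)

end FourierCoefficients

section TrigonometricPolynomials

open scoped LaurentPolynomial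

theorem laurentPolynomial_zeros_finite {K : Type*} [Field K] {p : K[T;T⁻¹]} (hp : p ≠ 0) :
    {x : Kˣ | p.eval₂ (RingHom.id K) x = 0}.Finite := by
  obtain ⟨N, q, hq⟩ := p.exists_T_pow
  have hq0 : q ≠ 0 := by
    rintro rfl
    rw [map_zero, eq_comm, (LaurentPolynomial.isUnit_T (R := K) N).mul_left_eq_zero] at hq
    exact hp hq
  have hroots := (Polynomial.finite_setOfPred_isRoot hq0).preimage
    (Units.val_injective (α := K)).injOn
  refine hroots.subset fun x hx ↦ ?_
  change q.eval (x : K) = 0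
  rw [← Polynomial.eval₂_id, ← LaurentPolynomial.eval₂_toLaurent, hq, map_mul, hx, zero_mul]

variable {T : ℝ} [hT : Fact (0 < T)]

instance addCircle_volume_nullSingletonClass :
    NullSingletonClass (volume : Measure (AddCircle T)) where
  measure_singleton t := by
    simpa [hT.out.le] using AddCircle.volume_closedBall T (x := t) 0

theorem ae_sum_mul_fourier_ne_zero {ι : Type*} [Fintype ι] {g : ι → ℤ}
    (hg : Function.Injective g) {c : ι → ℂ} (hc : c ≠ 0) :
    ∀ᵐ t : AddCircle T, ∑ i, c i * fourier (g i) t ≠ 0 := by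
  classical
  let p : ℂ[T;T⁻¹] := ∑ i, LaurentPolynomial.C (c i) * LaurentPolynomial.T (g i)
  have hp : p ≠ 0 := by
    obtain ⟨j, hj⟩ := Function.ne_iff.1 hc
    have hcoeff : p.coeff (g j) = c j := by
      simp only [p, ← LaurentPolynomial.single_eq_C_mul_T, AddMonoidAlgebra.coeff_sum,
        AddMonoidAlgebra.coeff_single]
      simp [Finsupp.single_apply, hg.eq_iff]
    exact fun hp0 ↦ hj (by rw [← hcoeff, hp0]; rfl)
  let z : AddCircle T → ℂˣ := fun t ↦ Circle.toUnits t.toCircle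
  have hz : Function.Injective z := fun s t hst ↦
    AddCircle.injective_toCircle hT.out.ne' (Subtype.ext (congrArg Units.val hst))
  have heval (t : AddCircle T) :
      p.eval₂ (RingHom.id ℂ) (z t) = ∑ i, c i * fourier (g i) t := by
    simp [p, z, map_sum, map_mul, LaurentPolynomial.eval₂_T, LaurentPolynomial.eval₂_C,
      fourier_apply, AddCircle.toCircle_zsmul]
  have hfin := (laurentPolynomial_zeros_finite hp).preimage hz.injOn
  filter_upwards [hfin.countable.ae_notMem volume] with t ht
  rwa [← heval]

end TrigonometricPolynomials

section ToeplitzMatrix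

/-- The block `(f̂(gᵢ - hⱼ))ᵢⱼ` of the Toeplitz operator with symbol `f`. The rows and columns are
indexed by arbitrary types through `g` and `h`, so that a union of two index sets can be taken
along a sum type. -/
noncomputable def toeplitzMatrix (f : AddCircle (1 : ℝ) → ℝ) {ι κ : Type*} (g : ι → ℤ)
    (h : κ → ℤ) : Matrix ι κ ℂ :=
  Matrix.of fun i j ↦ fhat f (g i - h j)

open scoped ComplexOrder MatrixOrder

variable {f : AddCircle (1 : ℝ) → ℝ} {ι κ : Type*}

theorem toeplitzMatrix_conjTranspose (f : AddCircle (1 : ℝ) → ℝ) (g : ι → ℤ) (h : κ → ℤ) :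
    (toeplitzMatrix f g h)ᴴ = toeplitzMatrix f h g := by
  ext i j
  simp only [toeplitzMatrix, conjTranspose_apply, of_apply, ← fhat_neg, neg_sub]

theorem toeplitzMatrix_sumElim (f : AddCircle (1 : ℝ) → ℝ) (g : ι → ℤ) (h : κ → ℤ) :
    toeplitzMatrix f (Sum.elim g h) (Sum.elim g h) =
      fromBlocks (toeplitzMatrix f g g) (toeplitzMatrix f g h) (toeplitzMatrix f g h)ᴴ
        (toeplitzMatrix f h h) := by
  rw [toeplitzMatrix_conjTranspose]
  ext (i | i) (j | j) <;> rfl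

theorem one_sub_toeplitzMatrix [DecidableEq ι] (hf : Integrable f) {g : ι → ℤ}
    (hg : Function.Injective g) : 1 - toeplitzMatrix f g g = toeplitzMatrix (1 - f) g g := by
  ext i j
  simp only [toeplitzMatrix, Matrix.sub_apply, of_apply, fhat_one_sub hf, one_apply, sub_eq_zero,
    hg.eq_iff]

section Fintype

variable [Fintype ι]

theorem ofReal_norm_sum_mul_fourier_sq (g : ι → ℤ) (c : ι → ℂ) (t : AddCircle (1 : ℝ)) :
    ((‖∑ i, c i * fourier (g i) t‖ ^ 2 : ℝ) : ℂ) =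
      ∑ i, ∑ j, star (c i) * c j * fourier (-(g i - g j)) t := by
  rw [← Complex.normSq_eq_norm_sq, Complex.normSq_eq_conj_mul_self, map_sum, Finset.sum_mul_sum]
  refine Finset.sum_congr rfl fun i _ ↦ Finset.sum_congr rfl fun j _ ↦ ?_
  rw [neg_sub, sub_eq_neg_add, fourier_add, fourier_neg, map_mul, Complex.star_def]
  ring

theorem star_dotProduct_toeplitzMatrix_mulVec (hf : Integrable f) (g : ι → ℤ) (c : ι → ℂ) :
    star c ⬝ᵥ toeplitzMatrix f g g *ᵥ c =
      ((∫ t, f t * ‖∑ i, c i * fourier (g i) t‖ ^ 2 : ℝ) : ℂ) := by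
  have hterm (i j : ι) := (integrable_fourier_mul hf (-(g i - g j))).const_mul (star (c i) * c j)
  calc star c ⬝ᵥ toeplitzMatrix f g g *ᵥ c
      = ∑ i, ∑ j, ∫ t, star (c i) * c j * (fourier (-(g i - g j)) t * f t) := by
        simp only [dotProduct, mulVec, Finset.mul_sum, toeplitzMatrix, of_apply, fhat_eq_integral,
          integral_const_mul, Pi.star_apply]
        exact Finset.sum_congr rfl fun i _ ↦ Finset.sum_congr rfl fun j _ ↦ by ring
    _ = ∫ t, ∑ i, ∑ j, star (c i) * c j * (fourier (-(g i - g j)) t * f t) := by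
        rw [integral_finsetSum _ fun i _ ↦ integrable_finsetSum _ fun j _ ↦ hterm i j]
        exact Finset.sum_congr rfl fun i _ ↦ (integral_finsetSum _ fun j _ ↦ hterm i j).symm
    _ = ((∫ t, f t * ‖∑ i, c i * fourier (g i) t‖ ^ 2 : ℝ) : ℂ) := by
        rw [← integral_complex_ofReal]
        refine integral_congr_ae (ae_of_all _ fun t ↦ ?_)
        simp only [Complex.ofReal_mul, ofReal_norm_sum_mul_fourier_sq, Finset.mul_sum]
        exact Finset.sum_congr rfl fun i _ ↦ Finset.sum_congr rfl fun j _ ↦ by ring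

theorem integrable_mul_norm_sum_mul_fourier_sq (hf : Integrable f) (g : ι → ℤ) (c : ι → ℂ) :
    Integrable fun t ↦ f t * ‖∑ i, c i * fourier (g i) t‖ ^ 2 := by
  have hcont : Continuous fun t : AddCircle (1 : ℝ) ↦ ‖∑ i, c i * fourier (g i) t‖ ^ 2 := by
    fun_prop
  obtain ⟨b, hb⟩ := (isCompact_range hcont).isBounded.exists_norm_le
  exact hf.mul_bdd hcont.aestronglyMeasurable (ae_of_all _ fun t ↦ hb _ ⟨t, rfl⟩)

end Fintype

variable [Finite ι]

theorem toeplitzMatrix_posSemidef (hf : Integrable f) (hf0 : 0 ≤ᵐ[volume] f) (g : ι → ℤ) :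
    (toeplitzMatrix f g g).PosSemidef := by
  cases nonempty_fintype ι
  refine .of_dotProduct_mulVec_nonneg (toeplitzMatrix_conjTranspose f g g) fun c ↦ ?_
  rw [star_dotProduct_toeplitzMatrix_mulVec hf, Complex.zero_le_real]
  refine integral_nonneg_of_ae ?_
  filter_upwards [hf0] with t ht using mul_nonneg ht (sq_nonneg _)

theorem toeplitzMatrix_le_one [DecidableEq ι] (hf : Integrable f) (hf1 : f ≤ᵐ[volume] 1)
    {g : ι → ℤ} (hg : Function.Injective g) : toeplitzMatrix f g g ≤ 1 := by
  rw [le_iff, one_sub_toeplitzMatrix hf hg]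
  refine toeplitzMatrix_posSemidef ((integrable_const 1).sub hf) ?_ g
  filter_upwards [hf1] with t ht using sub_nonneg.2 ht

theorem toeplitzMatrix_posDef (hf : Integrable f) (hf0 : 0 ≤ᵐ[volume] f)
    (hne : ¬ f =ᵐ[volume] 0) {g : ι → ℤ} (hg : Function.Injective g) :
    (toeplitzMatrix f g g).PosDef := by
  cases nonempty_fintype ι
  refine .of_dotProduct_mulVec_pos (toeplitzMatrix_conjTranspose f g g) fun c hc ↦ ?_
  rw [star_dotProduct_toeplitzMatrix_mulVec hf, Complex.zero_lt_real]
  have hnonneg : 0 ≤ᵐ[volume] fun t ↦ f t * ‖∑ i, c i * fourier (g i) t‖ ^ 2 := by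
    filter_upwards [hf0] with t ht using mul_nonneg ht (sq_nonneg _)
  refine (integral_nonneg_of_ae hnonneg).lt_of_ne' fun hzero ↦ hne ?_
  have hvanish := (integral_eq_zero_iff_of_nonneg_ae hnonneg
    (integrable_mul_norm_sum_mul_fourier_sq hf g c)).1 hzero
  filter_upwards [hvanish, ae_sum_mul_fourier_ne_zero hg hc] with t hprod htrig
  exact (mul_eq_zero.1 hprod).resolve_right (pow_ne_zero 2 (norm_ne_zero_iff.2 htrig))

end ToeplitzMatrix

section DeterminantalMeasure

open scoped ComplexOrder MatrixOrder

/-- The event that all the sites `g i` are occupied. -/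
def allOccupied {ι : Type*} (g : ι → ℤ) : Set (ℤ → Bool) :=
  {x | ∀ i, x (g i) = true}

variable {ι κ : Type*} {f : AddCircle (1 : ℝ) → ℝ} {μ : Measure (ℤ → Bool)} {g : ι → ℤ}
  {h : κ → ℤ}

theorem allOccupied_sumElim (g : ι → ℤ) (h : κ → ℤ) :
    allOccupied (Sum.elim g h) = allOccupied g ∩ allOccupied h := by
  ext x
  exact Sum.forall

theorem measurableSet_allOccupied [Countable ι] {S : Set ℤ} (hg : ∀ i, g i ∈ S) :
    MeasurableSet[coordSigma S] (allOccupied g) := by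
  refine ⟨⋂ i, (fun y : S → Bool ↦ y ⟨g i, hg i⟩) ⁻¹' {true}, ?_, ?_⟩
  · exact .iInter fun i ↦ measurable_pi_apply _ (measurableSet_singleton true)
  · ext x
    simp [allOccupied]

theorem IsDeterminantal.real_allOccupied_eq_det [Fintype ι] [DecidableEq ι]
    (hdet : IsDeterminantal f μ) (hg : Function.Injective g) :
    (μ.real (allOccupied g) : ℂ) = (toeplitzMatrix f g g).det := by
  have hevent : allOccupied g = {x | ∀ n ∈ Finset.univ.map ⟨g, hg⟩, x n = true} := by
    ext x
    simp [allOccupied]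
  let e := (Equiv.subtypeUnivEquiv Finset.mem_univ).symm.trans
    (Finset.univ.equivMap ⟨g, hg⟩)
  rw [hevent, Measure.real, hdet, ← det_submatrix_equiv_self e]
  rfl

theorem IsDeterminantal.real_allOccupied_pos [Finite ι] (hdet : IsDeterminantal f μ)
    (hf : Integrable f) (hf0 : 0 ≤ᵐ[volume] f) (hne : ¬ f =ᵐ[volume] 0)
    (hg : Function.Injective g) : 0 < μ.real (allOccupied g) := by
  classical
  cases nonempty_fintype ι
  rw [← Complex.zero_lt_real, hdet.real_allOccupied_eq_det hg]
  exact (toeplitzMatrix_posDef hf hf0 hne hg).det_pos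

theorem one_sub_psi_mul_le_real_inter {ℓ : ℕ} (hψ : psi μ ℓ ≠ ∞) {A B : Set (ℤ → Bool)}
    (hA : MeasurableSet[coordSigma {n : ℤ | n ≤ 0}] A)
    (hB : MeasurableSet[coordSigma {n : ℤ | (ℓ : ℤ) ≤ n}] B) :
    (1 - (psi μ ℓ).toReal) * (μ.real A * μ.real B) ≤ μ.real (A ∩ B) := by
  obtain hzero | hpos := (show 0 ≤ μ.real A * μ.real B by positivity).eq_or_lt
  · rw [← hzero, mul_zero]
    exact measureReal_nonneg
  have hApos : 0 < μ A := pos_iff_ne_zero.2 fun hA0 ↦ by simp [Measure.real, hA0] at hpos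
  have hBpos : 0 < μ B := pos_iff_ne_zero.2 fun hB0 ↦ by simp [Measure.real, hB0] at hpos
  have hle : ENNReal.ofReal |μ.real (A ∩ B) / (μ.real A * μ.real B) - 1| ≤ psi μ ℓ :=
    le_iSup_of_le A <| le_iSup_of_le hA <| le_iSup_of_le hApos <| le_iSup_of_le B <|
      le_iSup_of_le hB <| le_iSup_of_le hBpos le_rfl
  have habs := abs_le.1 ((ENNReal.ofReal_le_iff_le_toReal hψ).1 hle)
  rw [← le_div_iff₀ hpos]
  linarith [habs.1]

variable [Fintype ι] [Fintype κ]

theorem IsDeterminantal.real_inter_allOccupied_le (hdet : IsDeterminantal f μ)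
    (hf : Integrable f) (hf0 : 0 ≤ᵐ[volume] f) (hf1 : f ≤ᵐ[volume] 1)
    (hne : ¬ f =ᵐ[volume] 0) (hgh : Function.Injective (Sum.elim g h)) :
    μ.real (allOccupied g ∩ allOccupied h) ≤
      μ.real (allOccupied g) * μ.real (allOccupied h) *
        Real.exp (-∑ i, ∑ j, ‖fhat f (g i - h j)‖ ^ 2) := by
  classical
  have hg : Function.Injective g := hgh.comp Sum.inl_injective
  have hh : Function.Injective h := hgh.comp Sum.inr_injective
  have hblock := toeplitzMatrix_posSemidef hf hf0 (Sum.elim g h)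
  rw [toeplitzMatrix_sumElim] at hblock
  have hbound := det_fromBlocks_le_mul_exp_neg_sum_norm_sq
    (toeplitzMatrix_posDef hf hf0 hne hg) (toeplitzMatrix_le_one hf hf1 hg)
    (toeplitzMatrix_posDef hf hf0 hne hh) (toeplitzMatrix_le_one hf hf1 hh) hblock
  rw [← toeplitzMatrix_sumElim, ← hdet.real_allOccupied_eq_det hgh,
    ← hdet.real_allOccupied_eq_det hg, ← hdet.real_allOccupied_eq_det hh,
    allOccupied_sumElim] at hbound
  rw [← Complex.real_le_real, Complex.ofReal_mul, Complex.ofReal_mul]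
  exact hbound

theorem IsDeterminantal.sum_norm_fhat_sub_sq_le (hdet : IsDeterminantal f μ)
    (hf : Integrable f) (hf0 : 0 ≤ᵐ[volume] f) (hf1 : f ≤ᵐ[volume] 1)
    (hne : ¬ f =ᵐ[volume] 0) {ℓ : ℕ} (hψ : psi μ ℓ < 1)
    (hgh : Function.Injective (Sum.elim g h)) (hg : ∀ i, g i ≤ 0) (hh : ∀ j, ℓ ≤ h j) :
    ∑ i, ∑ j, ‖fhat f (g i - h j)‖ ^ 2 ≤ -Real.log (1 - (psi μ ℓ).toReal) := by
  have hψ_top : psi μ ℓ ≠ ∞ := hψ.ne_top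
  have hψ_toReal : (psi μ ℓ).toReal < 1 := by
    simpa using ENNReal.toReal_strict_mono ENNReal.one_ne_top hψ
  have hgpos := hdet.real_allOccupied_pos hf hf0 hne (hgh.comp Sum.inl_injective)
  have hhpos := hdet.real_allOccupied_pos hf hf0 hne (hgh.comp Sum.inr_injective)
  have hexp : 1 - (psi μ ℓ).toReal ≤ Real.exp (-∑ i, ∑ j, ‖fhat f (g i - h j)‖ ^ 2) := by
    refine le_of_mul_le_mul_right ?_ (mul_pos hgpos hhpos)
    calc (1 - (psi μ ℓ).toReal) * (μ.real (allOccupied g) * μ.real (allOccupied h))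
        ≤ μ.real (allOccupied g ∩ allOccupied h) :=
          one_sub_psi_mul_le_real_inter hψ_top (measurableSet_allOccupied hg)
            (measurableSet_allOccupied hh)
      _ ≤ _ := (hdet.real_inter_allOccupied_le hf hf0 hf1 hne hgh).trans_eq (mul_comm _ _)
  linarith [(Real.log_le_iff_le_exp (sub_pos.2 hψ_toReal)).2 hexp]

theorem IsDeterminantal.hankel_sum_norm_fhat_sq_le (hdet : IsDeterminantal f μ)
    (hf : Integrable f) (hf0 : 0 ≤ᵐ[volume] f) (hf1 : f ≤ᵐ[volume] 1)
    (hne : ¬ f =ᵐ[volume] 0) {ℓ : ℕ} (hψ : psi μ ℓ < 1) (N : ℕ) :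
    ∑ i ∈ Finset.range N, ∑ j ∈ Finset.range N, ‖fhat f (i + j + (ℓ + 1) : ℕ)‖ ^ 2 ≤
      -Real.log (1 - (psi μ ℓ).toReal) := by
  let g : Fin N → ℤ := fun i ↦ -i
  let h : Fin N → ℤ := fun j ↦ j + (ℓ + 1)
  have hgh : Function.Injective (Sum.elim g h) :=
    .sumElim (fun i j hij ↦ by grind) (fun i j hij ↦ by grind) fun i j ↦ by grind
  have hterm (i j : Fin N) :
      ‖fhat f (i + j + (ℓ + 1) : ℕ)‖ = ‖fhat f (g i - h j)‖ := by
    rw [← norm_fhat_neg]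
    congr 2
    grind
  simp only [Finset.sum_range, hterm]
  exact hdet.sum_norm_fhat_sub_sq_le hf hf0 hf1 hne hψ hgh (fun i ↦ by grind) fun j ↦ by grind

end DeterminantalMeasure

section HankelSums

theorem sum_succ_nsmul_le_sum_sum_add {M : Type*} [AddCommMonoid M] [PartialOrder M]
    [IsOrderedAddMonoid M] {a : ℕ → M} (ha : 0 ≤ a) (N : ℕ) :
    ∑ k ∈ Finset.range N, (k + 1) • a k ≤
      ∑ i ∈ Finset.range N, ∑ j ∈ Finset.range N, a (i + j) := by
  calc ∑ k ∈ Finset.range N, (k + 1) • a k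
      = ∑ k ∈ Finset.range N, ∑ i ∈ Finset.range (k + 1), a (i + (k - i)) := by
        refine Finset.sum_congr rfl fun k _ ↦ ?_
        rw [Finset.sum_congr rfl fun i hi ↦ by
          rw [Nat.add_sub_of_le (Finset.mem_range_succ_iff.1 hi)]]
        simp
    _ = ∑ i ∈ Finset.range N, ∑ j ∈ Finset.range (N - i), a (i + j) :=
        Finset.sum_range_diag_flip N fun i j ↦ a (i + j)
    _ ≤ ∑ i ∈ Finset.range N, ∑ j ∈ Finset.range N, a (i + j) := by
        gcongr with i
        · exact fun _ _ _ ↦ ha _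
        · exact Nat.sub_le N i

theorem summable_natCast_mul_of_hankel_sum_le {a : ℕ → ℝ} (ha : 0 ≤ a) {m : ℕ} {C : ℝ}
    (hC : ∀ N, ∑ i ∈ Finset.range N, ∑ j ∈ Finset.range N, a (i + j + m) ≤ C) :
    Summable fun n : ℕ ↦ (n : ℝ) * a n := by
  have hshift : Summable fun k : ℕ ↦ (k + 1) • a (k + m) :=
    summable_of_sum_range_le (fun k ↦ nsmul_nonneg (ha _) _) fun N ↦
      (sum_succ_nsmul_le_sum_sum_add (fun k ↦ ha (k + m)) N).trans (hC N)
  rw [← summable_nat_add_iff m]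
  refine (hshift.mul_left ((m : ℝ) + 1)).of_nonneg_of_le
    (fun k ↦ mul_nonneg (Nat.cast_nonneg _) (ha _)) fun k ↦ ?_
  rw [nsmul_eq_mul, ← mul_assoc]
  refine mul_le_mul_of_nonneg_right ?_ (ha _)
  exact_mod_cast (show k + m ≤ (m + 1) * (k + 1) by nlinarith [Nat.zero_le (m * k)])

end HankelSums

theorem psi_mixing_implies_sobolev_general {f : AddCircle (1 : ℝ) → ℝ}
    {μ : Measure (ℤ → Bool)} (hdet : IsDeterminantal f μ) (hf : Integrable f)
    (hf0 : 0 ≤ᵐ[volume] f) (hf1 : f ≤ᵐ[volume] 1) {ℓ : ℕ} (hψ : psi μ ℓ < 1) :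
    Summable (fun n : ℕ ↦ (n : ℝ) * ‖fhat f n‖ ^ 2) ∧
      Summable (fun n : ℤ ↦ |(n : ℝ)| * ‖fhat f n‖ ^ 2) := by
  have hnat : Summable fun n : ℕ ↦ (n : ℝ) * ‖fhat f n‖ ^ 2 := by
    by_cases hne : f =ᵐ[volume] 0
    · simp [fhat_eq_zero_of_ae_eq_zero hne, summable_zero]
    · exact summable_natCast_mul_of_hankel_sum_le (a := fun n ↦ ‖fhat f n‖ ^ 2)
        (fun n ↦ sq_nonneg _) (hdet.hankel_sum_norm_fhat_sq_le hf hf0 hf1 hne hψ)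
  refine ⟨hnat, .of_nat_of_neg ?_ ?_⟩
  · simpa using hnat
  · simpa [norm_fhat_neg] using hnat

/-- If the stationary determinantal measure `μ_f` is ψ-mixing, then
`Σ_{n=1}^∞ n|f̂(n)|² < ∞`, and, `f` being real-valued, `f ∈ H^{1/2}(𝕋)`,
i.e. `Σ_{n∈ℤ} |n||f̂(n)|² < ∞`. -/
theorem psi_mixing_implies_sobolev
    (f : AddCircle (1:ℝ) → ℝ) (hmeas : Measurable f)
    (h0 : ∀ t, 0 ≤ f t) (h1 : ∀ t, f t ≤ 1) (hint : Integrable f)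
    (hne0 : ¬ (∀ᵐ t : AddCircle (1:ℝ), f t = 0))
    (hne1 : ¬ (∀ᵐ t : AddCircle (1:ℝ), f t = 1))
    (μ : Measure (ℤ → Bool)) [IsProbabilityMeasure μ] (hdet : IsDeterminantal f μ)
    (hmix : Tendsto (fun ℓ : ℕ => psi μ ℓ) atTop (nhds 0)) :
    Summable (fun n : ℕ => (n : ℝ) * ‖fhat f n‖ ^ 2) ∧
      Summable (fun n : ℤ => |(n : ℝ)| * ‖fhat f n‖ ^ 2) := by
  obtain ⟨ℓ, hψ⟩ := (hmix.eventually_lt_const one_pos).exists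
  exact psi_mixing_implies_sobolev_general hdet hint (ae_of_all _ h0) (ae_of_all _ h1) hψ
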